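/- Any restricted-best-response fixed point is an ε-Nash equilibrium: let ε ∈ [0,1], let D* ⊆ V, and let x be a mixed strategy profile such that (a) for every i ∈ D*, u_i(x_i, x_{−i}) ≥ u_i(x̂_i, x_{−i}) for all x̂_i with Σ_j x̂_{ij} = 1 and x̂_{ii} ≥ ε, and (b) for every j ∉ D*, u_j(x_j, x_{−j}) ≥ u_j(x̂_j, x_{−j}) for all x̂_j with Σ_k x̂_{jk} = 1. Then x is an ε-Nash equilibrium: for every agent i and every mixed strategy x̂_i, u_i(x) ≥ (1−ε)·u_i(x̂_i, x_{−i}). -/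

import Mathlib

/-! An agent who abstains has no guru and gets utility zero. Hence, against a fixed mixed profile of
the others, her expected utility is a linear function, with nonnegative coefficients, of the
probabilities with which she votes and delegates; her probability of abstaining does not enter.

Given a deviation `y` of agent `i`, scale it by `1 - ε` and put all of the remaining probability,
which is at least `ε`, on voting herself. The resulting strategy is admissible in the restricted
best-response condition, and since it dominates `(1 - ε) • y` coordinatewise, it earns at least
`1 - ε` times as much as `y`. -/

open Finset

/-- The guru of agent `i` under pure profile `s` (where `s i = some j` means `i`
delegates to `j`, with `s i = some i` meaning `i` votes herself, and `s i = none`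
meaning `i` abstains): follow delegation arcs for `n` steps; the endpoint is the
guru provided it votes itself. -/
def guru {n : ℕ} (s : Fin n → Option (Fin n)) (i : Fin n) : Option (Fin n) :=
  ((fun o => Option.bind o s)^[n] (some i)).bind
    (fun j => if s j = some j then some j else none)

/-- Utility of agent `i` in the pure profile `s`: `u i (g i)` if the guru exists, else `0`. -/
def pureUtil {n : ℕ} (u : Fin n → Fin n → ℝ) (s : Fin n → Option (Fin n)) (i : Fin n) : ℝ :=
  (guru s i).elim 0 (u i)

/-- A mixed strategy for a single agent: nonnegative, total probability at most one
(the residual probability is abstention). -/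
def IsStrat {n : ℕ} (y : Fin n → ℝ) : Prop := (∀ j, 0 ≤ y j) ∧ (∑ j, y j) ≤ 1

/-- A mixed strategy profile. -/
def IsMixed {n : ℕ} (x : Fin n → Fin n → ℝ) : Prop := ∀ i, IsStrat (x i)

/-- Probability that the independent randomization `x` produces the pure profile `s`. -/
def prob {n : ℕ} (x : Fin n → Fin n → ℝ) (s : Fin n → Option (Fin n)) : ℝ :=
  ∏ i, (s i).elim (1 - ∑ j, x i j) (x i)

/-- Expected utility of agent `i` under the mixed profile `x`. -/
def util {n : ℕ} (u x : Fin n → Fin n → ℝ) (i : Fin n) : ℝ :=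
  ∑ s : Fin n → Option (Fin n), prob x s * pureUtil u s i

/-- Expected social welfare of the mixed profile `x`. -/
def SW {n : ℕ} (u x : Fin n → Fin n → ℝ) : ℝ := ∑ i, util u x i

/-- The set of social-welfare values achievable by mixed profiles; `OPT` is its greatest element. -/
def SWvals {n : ℕ} (u : Fin n → Fin n → ℝ) : Set ℝ :=
  {w | ∃ x, IsMixed x ∧ w = SW u x}

/-- `x` is an `ε`-Nash equilibrium. -/
def EpsNash {n : ℕ} (u : Fin n → Fin n → ℝ) (ε : ℝ) (x : Fin n → Fin n → ℝ) : Prop :=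
  ∀ i y, IsStrat y → util u x i ≥ (1 - ε) * util u (Function.update x i y) i

/-- `x` is an (exact, mixed) Nash equilibrium. -/
def NashEq {n : ℕ} (u x : Fin n → Fin n → ℝ) : Prop :=
  ∀ i y, IsStrat y → util u x i ≥ util u (Function.update x i y) i

section

variable {n : ℕ} {u x : Fin n → Fin n → ℝ} {s : Fin n → Option (Fin n)} {i : Fin n}
  {y z : Fin n → ℝ}

lemma guru_of_abstain (h : s i = none) : guru s i = none := by
  have none_fixed (m : ℕ) : (fun o => Option.bind o s)^[m] none = none :=
    Function.iterate_fixed rfl m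
  obtain ⟨m, rfl⟩ := Nat.exists_eq_add_one.mpr i.pos
  simp only [guru, Function.iterate_succ_apply, Option.bind_some, h, none_fixed, Option.bind_none]

lemma pureUtil_of_abstain (h : s i = none) : pureUtil u s i = 0 := by
  rw [pureUtil, guru_of_abstain h, Option.elim_none]

lemma pureUtil_nonneg (hu : ∀ j, 0 ≤ u i j) : 0 ≤ pureUtil u s i := by
  rw [pureUtil]
  cases guru s i with
  | none => exact le_rfl
  | some j => exact hu j

lemma isStrat_of_mem_stdSimplex (hy : y ∈ stdSimplex ℝ (Fin n)) : IsStrat y :=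
  ⟨hy.1, hy.2.le⟩

lemma IsMixed.update (hx : IsMixed x) (hy : IsStrat y) : IsMixed (Function.update x i y) :=
  (Function.forall_update_iff x fun _ w => IsStrat w).mpr ⟨hy, fun j _ => hx j⟩

lemma prob_nonneg (hx : IsMixed x) : 0 ≤ prob x s := by
  refine prod_nonneg fun k _ => ?_
  cases s k with
  | none => exact sub_nonneg.mpr (hx k).2
  | some j => exact (hx k).1 j

lemma util_nonneg (hu : ∀ j, 0 ≤ u i j) (hx : IsMixed x) : 0 ≤ util u x i :=
  sum_nonneg fun _ _ => mul_nonneg (prob_nonneg hx) (pureUtil_nonneg hu)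

lemma prob_update (x : Fin n → Fin n → ℝ) (i : Fin n) (y : Fin n → ℝ)
    (s : Fin n → Option (Fin n)) :
    prob (Function.update x i y) s =
      (s i).elim (1 - ∑ j, y j) y *
        ∏ k ∈ univ.erase i, (s k).elim (1 - ∑ j, x k j) (x k) := by
  rw [prob, ← mul_prod_erase univ _ (mem_univ i), Function.update_self]
  congr 1
  exact prod_congr rfl fun k hk => by rw [Function.update_of_ne (ne_of_mem_erase hk)]

lemma prob_update_eq_sum_of_eq_some {j : Fin n} (h : s i = some j) (x : Fin n → Fin n → ℝ)
    (y : Fin n → ℝ) :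
    prob (Function.update x i y) s =
      ∑ k, y k * prob (Function.update x i (Pi.single k 1)) s := by
  simp only [prob_update, h, Option.elim_some, Pi.single_apply, ite_mul, one_mul, zero_mul,
    mul_ite, mul_zero, sum_ite_eq, mem_univ, if_true]

lemma util_update_eq_sum (u x : Fin n → Fin n → ℝ) (i : Fin n) (y : Fin n → ℝ) :
    util u (Function.update x i y) i =
      ∑ j, y j * util u (Function.update x i (Pi.single j 1)) i := by
  have summand_eq_sum (s : Fin n → Option (Fin n)) :
      prob (Function.update x i y) s * pureUtil u s i =
        ∑ j, y j * (prob (Function.update x i (Pi.single j 1)) s * pureUtil u s i) := by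
    cases h : s i with
    | none => simp only [pureUtil_of_abstain h, mul_zero, sum_const_zero]
    | some j => simp only [prob_update_eq_sum_of_eq_some h x y, sum_mul, mul_assoc]
  simp only [util, summand_eq_sum, mul_sum]
  exact sum_comm

lemma mul_util_update_le (hu : ∀ j, 0 ≤ u i j) (hx : IsMixed x) {c : ℝ}
    (hyz : ∀ j, c * y j ≤ z j) :
    c * util u (Function.update x i y) i ≤ util u (Function.update x i z) i := by
  have coeff_nonneg (j : Fin n) : 0 ≤ util u (Function.update x i (Pi.single j 1)) i :=
    util_nonneg hu (hx.update (isStrat_of_mem_stdSimplex (single_mem_stdSimplex ℝ j)))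
  rw [util_update_eq_sum u x i y, util_update_eq_sum u x i z, mul_sum]
  refine sum_le_sum fun j _ => ?_
  rw [← mul_assoc]
  exact mul_le_mul_of_nonneg_right (hyz j) (coeff_nonneg j)

lemma IsStrat.exists_mem_stdSimplex_ge_mul {ε : ℝ} (hy : IsStrat y) (hε : ε ∈ Set.Icc 0 1)
    (i : Fin n) :
    ∃ z ∈ stdSimplex ℝ (Fin n), ε ≤ z i ∧ ∀ j, (1 - ε) * y j ≤ z j := by
  have hscaled : 0 ≤ (1 - ε) • y := smul_nonneg (sub_nonneg.mpr hε.2) hy.1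
  have hrest : ε ≤ 1 - (1 - ε) * ∑ j, y j := by
    linarith [mul_le_of_le_one_right (sub_nonneg.mpr hε.2) hy.2]
  let vote : Fin n → ℝ := Pi.single i (1 - (1 - ε) * ∑ j, y j)
  have hvote : 0 ≤ vote := Pi.single_nonneg.mpr (hε.1.trans hrest)
  refine ⟨(1 - ε) • y + vote, ⟨add_nonneg hscaled hvote, ?_⟩, ?_,
    fun j => le_add_of_nonneg_right (hvote j)⟩
  · simp [vote, sum_add_distrib, ← mul_sum]
  · calc
      ε ≤ vote i := by simpa only [vote, Pi.single_eq_same] using hrest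
      _ ≤ ((1 - ε) • y + vote) i := le_add_of_nonneg_left (hscaled i)

theorem stmt7_general {ε : ℝ} (hε : ε ∈ Set.Icc 0 1) (hu : ∀ i j, 0 ≤ u i j) (hx : IsMixed x)
    (hbest : ∀ i, ∀ z ∈ stdSimplex ℝ (Fin n), ε ≤ z i →
      util u (Function.update x i z) i ≤ util u x i) :
    EpsNash u ε x := by
  intro i y hy
  obtain ⟨z, hz, hzi, hyz⟩ := hy.exists_mem_stdSimplex_ge_mul hε i
  calc
    (1 - ε) * util u (Function.update x i y) i ≤ util u (Function.update x i z) i :=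
      mul_util_update_le (hu i) hx hyz
    _ ≤ util u x i := hbest i z hz hzi

end

/-- Any restricted-best-response fixed point is an ε-Nash equilibrium. -/
theorem stmt7 {n : ℕ} (ε : ℝ) (hε : ε ∈ Set.Icc (0:ℝ) 1)
    (u : Fin n → Fin n → ℝ) (hu : ∀ i j, 0 ≤ u i j ∧ u i j ≤ 1)
    (D : Set (Fin n)) (x : Fin n → Fin n → ℝ) (hx : IsMixed x)
    (ha : ∀ i ∈ D, ∀ y : Fin n → ℝ, (∀ j, 0 ≤ y j) → (∑ j, y j) = 1 → ε ≤ y i →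
      util u x i ≥ util u (Function.update x i y) i)
    (hb : ∀ i ∉ D, ∀ y : Fin n → ℝ, (∀ j, 0 ≤ y j) → (∑ j, y j) = 1 →
      util u x i ≥ util u (Function.update x i y) i) :
    EpsNash u ε x :=
  stmt7_general hε (fun i j => (hu i j).1) hx fun i y hy hyi =>
    (Classical.em (i ∈ D)).elim (ha i · y hy.1 hy.2 hyi) (hb i · y hy.1 hy.2)
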